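/- Let n ≥ 2, let 𝒳 = {x₁, …, x_n} ⊂ [0,1]^p be n fixed design points with empirical measure P_𝒳 := n^{-1} Σ_{i=1}^n δ_{x_i}, and let f, f₀ : [0,1]^p → ℝ satisfy sup_x |f(x)| ≤ √(log n) and sup_x |f₀(x)| ≤ √(log n). Then for every j ∈ {1,…,p}, the Shapley effects computed under P_𝒳 satisfy |S_{j,P_𝒳}(f) − S_{j,P_𝒳}(f₀)| ≤ 8√(log n) · ‖f − f₀‖_{2,P_𝒳}, where ‖g‖_{2,P_𝒳}² = n^{-1} Σ_{i=1}^n |g(x_i)|². -/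

import Mathlib

open MeasureTheory Finset

/-- The unit hypercube `[0,1]^p`. -/
abbrev UnitCube (p : ℕ) := Fin p → Set.Icc (0 : ℝ) 1

/-- The sub-σ-algebra of `[0,1]^p` generated by the projection onto the coordinates in `P`. -/
def coordSubAlg (p : ℕ) (P : Finset (Fin p)) : MeasurableSpace (UnitCube p) :=
  MeasurableSpace.comap (fun x (i : P) => x i) MeasurableSpace.pi

/-- The cost functional `c_{P,μ}(g) = E[(E[g(X) | X_P])²] - (E[g(X)])²` for `X ∼ μ`,
with `c_{∅,μ}(g) := 0`. -/
noncomputable def cost {p : ℕ} (μ : Measure (UnitCube p)) (P : Finset (Fin p))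
    (g : UnitCube p → ℝ) : ℝ :=
  if P = ∅ then 0 else
    (∫ x, ((μ[g | coordSubAlg p P]) x) ^ 2 ∂μ) - (∫ x, g x ∂μ) ^ 2

/-- The `j`-th Shapley effect under the measure `μ`:
`S_{j,μ}(g) = (p!)⁻¹ ∑_{P ⊆ [p]\{j}} (p - |P| - 1)! |P|! [c_{P∪{j},μ}(g) - c_{P,μ}(g)]`. -/
noncomputable def shapleyEffect {p : ℕ} (μ : Measure (UnitCube p)) (j : Fin p)
    (g : UnitCube p → ℝ) : ℝ :=
  ((p.factorial : ℝ))⁻¹ *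
    ∑ P ∈ (Finset.univ.erase j).powerset,
      ((p - P.card - 1).factorial : ℝ) * (P.card.factorial : ℝ) *
        (cost μ (insert j P) g - cost μ P g)

/-- The empirical probability measure `P_𝒳 = n⁻¹ ∑_{i=1}^n δ_{x_i}` on design points
`x₁, …, x_n ∈ [0,1]^p`. -/
noncomputable def empiricalMeasure {p n : ℕ} (x : Fin n → UnitCube p) :
    Measure (UnitCube p) :=
  (n : ENNReal)⁻¹ • ∑ i : Fin n, Measure.dirac (x i)

theorem condSq_diff_le {Ω : Type*} {m m0 : MeasurableSpace Ω} (hm : m ≤ m0) (μ : Measure Ω)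
    [IsProbabilityMeasure μ] (f g : Ω → ℝ) (hf : Integrable f μ) (hg : Integrable g μ) (M : ℝ)
    (hM : 0 ≤ M) (hfb : ∀ y, |f y| ≤ M) (hgb : ∀ y, |g y| ≤ M) :
    |(∫ x, ((μ[f | m]) x) ^ 2 ∂μ) - ∫ x, ((μ[g | m]) x) ^ 2 ∂μ| ≤
      2 * M * ∫ x, |f x - g x| ∂μ := by
  have bd : ∀ h : Ω → ℝ, (∀ y, |h y| ≤ M) → ∀ᵐ x ∂μ, |(μ[h | m]) x| ≤ M := by
    intro h hb
    exact ae_bdd_condExp_of_ae_bdd (R := ⟨M, hM⟩) (Filter.Eventually.of_forall hb)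
  have hfB := bd f hfb
  have hgB := bd g hgb
  have sqint : ∀ h : Ω → ℝ, (∀ᵐ x ∂μ, |(μ[h | m]) x| ≤ M) →
      Integrable (fun x => ((μ[h | m]) x) ^ 2) μ := by
    intro h hb
    refine Integrable.of_bound ((stronglyMeasurable_condExp.mono hm).aestronglyMeasurable.pow 2)
      (M ^ 2) ?_
    filter_upwards [hb] with x hx
    rw [norm_pow, Real.norm_eq_abs]
    gcongr
  rw [← integral_sub (sqint f hfB) (sqint g hgB)]
  have hsub := condExp_sub hf hg m
  calc |∫ x, (((μ[f | m]) x) ^ 2 - ((μ[g | m]) x) ^ 2) ∂μ|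
      ≤ ∫ x, |((μ[f | m]) x) ^ 2 - ((μ[g | m]) x) ^ 2| ∂μ := abs_integral_le_integral_abs
    _ ≤ ∫ x, 2 * M * |(μ[f - g | m]) x| ∂μ := by
        refine integral_mono_ae ((sqint f hfB).sub (sqint g hgB)).abs
          (integrable_condExp.abs.const_mul _) ?_
        filter_upwards [hfB, hgB, hsub] with x h1 h2 h3
        rw [h3, Pi.sub_apply, sq_sub_sq, abs_mul]
        gcongr
        calc _ ≤ |(μ[f | m]) x| + |(μ[g | m]) x| := abs_add_le _ _
          _ ≤ 2 * M := by linarith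
    _ = 2 * M * ∫ x, |(μ[f - g | m]) x| ∂μ := integral_const_mul _ _
    _ ≤ 2 * M * ∫ x, |f x - g x| ∂μ := by
        exact mul_le_mul_of_nonneg_left (integral_abs_condExp_le (f - g)) (by positivity)

theorem meanSq_diff_le {Ω : Type*} {m0 : MeasurableSpace Ω} (μ : Measure Ω)
    [IsProbabilityMeasure μ] (f g : Ω → ℝ) (hf : Integrable f μ) (hg : Integrable g μ) (M : ℝ)
    (hM : 0 ≤ M) (hfb : ∀ y, |f y| ≤ M) (hgb : ∀ y, |g y| ≤ M) :
    |(∫ x, f x ∂μ) ^ 2 - (∫ x, g x ∂μ) ^ 2| ≤ 2 * M * ∫ x, |f x - g x| ∂μ := by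
  have bd : ∀ h : Ω → ℝ, (∀ y, |h y| ≤ M) → |∫ x, h x ∂μ| ≤ M := by
    intro h hb
    simpa using norm_integral_le_of_norm_le_const (μ := μ) (f := h) (C := M)
      (Filter.Eventually.of_forall hb)
  rw [sq_sub_sq, abs_mul]
  gcongr
  · calc _ ≤ |∫ x, f x ∂μ| + |∫ x, g x ∂μ| := abs_add_le _ _
      _ ≤ 2 * M := by linarith [bd f hfb, bd g hgb]
  · rw [← integral_sub hf hg]
    exact abs_integral_le_integral_abs

theorem coordSubAlg_le (p : ℕ) (P : Finset (Fin p)) :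
    coordSubAlg p P ≤ MeasurableSpace.pi := by
  unfold coordSubAlg
  rw [← measurable_iff_comap_le]
  fun_prop

theorem cost_diff_le {p : ℕ} (μ : Measure (UnitCube p)) [IsProbabilityMeasure μ]
    (P : Finset (Fin p)) (f g : UnitCube p → ℝ)
    (hf : Integrable f μ) (hg : Integrable g μ) (M : ℝ)
    (hM : 0 ≤ M) (hfb : ∀ y, |f y| ≤ M) (hgb : ∀ y, |g y| ≤ M) :
    |cost μ P f - cost μ P g| ≤ 4 * M * ∫ x, |f x - g x| ∂μ := by
  have h0 : 0 ≤ ∫ x, |f x - g x| ∂μ := integral_nonneg fun x => abs_nonneg _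
  unfold cost
  split_ifs with h
  · simp only [sub_self, abs_zero]; positivity
  · have h1 := condSq_diff_le (coordSubAlg_le p P) μ f g hf hg M hM hfb hgb
    have h2 := meanSq_diff_le μ f g hf hg M hM hfb hgb
    rw [abs_le] at *
    constructor <;> linarith [h1.1, h1.2, h2.1, h2.2]

theorem weights_sum {p : ℕ} (j : Fin p) :
    ∑ P ∈ (Finset.univ.erase j).powerset,
      ((p - P.card - 1).factorial : ℝ) * (P.card.factorial : ℝ) = (p.factorial : ℝ) := by
  obtain ⟨q, rfl⟩ : ∃ q, p = q + 1 := ⟨p - 1, by have := j.pos; omega⟩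
  rw [Finset.sum_powerset_apply_card
    (fun k => ((q + 1 - k - 1).factorial : ℝ) * (k.factorial : ℝ))]
  have hc : (Finset.univ.erase j).card = q := by simp
  rw [hc]
  have : ∀ k ∈ Finset.range (q + 1), (q.choose k) •
      (((q + 1 - k - 1).factorial : ℝ) * (k.factorial : ℝ)) = (q.factorial : ℝ) := by
    intro k hk
    have hk' : k ≤ q := by simpa [Nat.lt_succ_iff] using hk
    have := Nat.choose_mul_factorial_mul_factorial hk'
    rw [show q + 1 - k - 1 = q - k by omega, nsmul_eq_mul, ← this]
    push_cast
    ring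
  rw [Finset.sum_congr rfl this]
  simp [Nat.factorial_succ]

theorem empirical_prob {p n : ℕ} (hn : 2 ≤ n) (x : Fin n → UnitCube p) :
    IsProbabilityMeasure (empiricalMeasure x) := by
  constructor
  simp only [empiricalMeasure, Measure.smul_apply, Measure.coe_finset_sum, Finset.sum_apply,
    measure_univ, smul_eq_mul, Finset.sum_const, Finset.card_univ, Fintype.card_fin,
    nsmul_eq_mul, mul_one]
  exact ENNReal.inv_mul_cancel (by simp; omega) (by simp)

theorem empirical_integrable {p n : ℕ} (hn : 2 ≤ n) (x : Fin n → UnitCube p)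
    (f : UnitCube p → ℝ) : Integrable f (empiricalMeasure x) := by
  unfold empiricalMeasure
  refine Integrable.smul_measure ?_ (by simp; omega)
  rw [integrable_finset_sum_measure]
  intro i _
  exact integrable_dirac (by simp)

theorem empirical_integral {p n : ℕ} (x : Fin n → UnitCube p)
    (f : UnitCube p → ℝ) :
    ∫ y, f y ∂(empiricalMeasure x) = (n : ℝ)⁻¹ * ∑ i, f (x i) := by
  unfold empiricalMeasure
  rw [integral_smul_measure, integral_finset_sum_measure]
  · simp
  · intro i _
    exact integrable_dirac (by simp)

theorem empirical_l1_le {p n : ℕ} (hn : 2 ≤ n) (x : Fin n → UnitCube p)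
    (f g : UnitCube p → ℝ) :
    ∫ y, |f y - g y| ∂(empiricalMeasure x) ≤
      Real.sqrt ((n : ℝ)⁻¹ * ∑ i : Fin n, |f (x i) - g (x i)| ^ 2) := by
  rw [empirical_integral]
  apply Real.le_sqrt_of_sq_le
  have h := sq_sum_le_card_mul_sum_sq (s := Finset.univ) (f := fun i => |f (x i) - g (x i)|)
  simp only [Finset.card_univ, Fintype.card_fin] at h
  have hn0 : (0 : ℝ) < n := by positivity
  calc _ = ((n : ℝ)⁻¹) ^ 2 * (∑ i, |f (x i) - g (x i)|) ^ 2 := by rw [mul_pow]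
    _ ≤ ((n : ℝ)⁻¹) ^ 2 * (n * ∑ i, |f (x i) - g (x i)| ^ 2) := by gcongr
    _ = _ := by field_simp


/-- For `n ≥ 2` fixed design points with empirical measure `P_𝒳`, if `f, f₀`
are bounded in supremum norm by `√(log n)`, then for every `j ∈ [p]`, the Shapley effects
under `P_𝒳` satisfy `|S_{j,P_𝒳}(f) - S_{j,P_𝒳}(f₀)| ≤ 8 √(log n) ‖f - f₀‖_{2,P_𝒳}`. -/
theorem stmt12 {p n : ℕ} (hn : 2 ≤ n) (x : Fin n → UnitCube p)
    (f f₀ : UnitCube p → ℝ)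
    (hfb : ∀ y, |f y| ≤ Real.sqrt (Real.log n))
    (hf₀b : ∀ y, |f₀ y| ≤ Real.sqrt (Real.log n)) :
    ∀ j : Fin p,
      |shapleyEffect (empiricalMeasure x) j f - shapleyEffect (empiricalMeasure x) j f₀| ≤
        8 * Real.sqrt (Real.log n) *
          Real.sqrt ((n : ℝ)⁻¹ * ∑ i : Fin n, |f (x i) - f₀ (x i)| ^ 2) := by
  intro j
  haveI := empirical_prob hn x
  set μ := empiricalMeasure x with hμ
  set M := Real.sqrt (Real.log n) with hMdef
  have hM : 0 ≤ M := Real.sqrt_nonneg _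
  have hc : ∀ P, |cost μ P f - cost μ P f₀| ≤ 4 * M * ∫ y, |f y - f₀ y| ∂μ := fun P =>
    cost_diff_le μ P f f₀ (empirical_integrable hn x f) (empirical_integrable hn x f₀) M hM hfb hf₀b
  have hl := empirical_l1_le hn x f f₀
  rw [← hμ] at hl
  set D := ∫ y, |f y - f₀ y| ∂μ with hD
  refine le_trans ?_ (mul_le_mul_of_nonneg_left hl (by positivity))
  unfold shapleyEffect
  rw [← mul_sub, ← Finset.sum_sub_distrib, abs_mul, abs_of_nonneg (by positivity)]
  have hp : (0 : ℝ) < p.factorial := by exact_mod_cast p.factorial_pos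
  rw [inv_mul_le_iff₀ hp, ← weights_sum j, Finset.sum_mul]
  refine (Finset.abs_sum_le_sum_abs _ _).trans (Finset.sum_le_sum fun P _ => ?_)
  rw [← mul_sub, abs_mul, abs_of_nonneg (by positivity)]
  gcongr
  have h1 := hc (insert j P)
  have h2 := hc P
  rw [abs_le] at *
  constructor <;> linarith [h1.1, h1.2, h2.1, h2.2]
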